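/- arXiv:1409.7883 — 2 statements merged into one kernel-verified Lean document; each statement's English description precedes it below -/
import Mathlib

section
/- Let K be an algebraically closed field and let f : K^n → K^n be a non-special polynomial automorphism, i.e., Jac(f) ≠ 1. Let h ∈ K[x_1,…,x_n] be a nonconstant squarefree polynomial whose zero set Z(h) is contained in Fix(f). Then h is irreducible; in particular the hypersurface H = Z(h) is irreducible. -/
/-!
Write `φ` for the substitution `p ↦ p ∘ F` on polynomials; it is an automorphism of the
polynomial ring, and by the chain rule the Jacobian of `F` is a nonzero constant `c ≠ 1`.
Since `h` is squarefree, `(h)` is radical and the Nullstellensatz gives `F_i = x_i + h A_i`.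
Let `D = ∑ A_k ∂_k`. Modulo `h`, the Jacobian matrix is the rank one perturbation
`I + A (∇h)ᵀ`, so `c - 1 ≡ D h` (`dvd_jacPoly_sub`): thus `D h` is a nonzero constant modulo `h`.

Suppose `h = p q` with `p` irreducible and `q` not a unit. As `φ` is the identity modulo `h`,
the irreducible polynomial `φ p` is divisible by `p`, so `φ p = u p` for a constant `u`; then
`p q ∣ (u - 1) p` forces `u = 1`. Differentiating `φ p = p` with the chain rule and reducing
modulo `h` gives `D p · ∂_j h ≡ 0` for all `j` (`dvd_mul_pderiv_of_fixed`), hence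
`D p · D h ≡ 0`, hence `D p ≡ 0` modulo `h`. Then `D h = p D q + q D p` is divisible by `p`,
contradicting that `D h` is a nonzero constant modulo `p`.
-/

open MvPolynomial

/-- The polynomial map `K^n → K^n` induced by the component polynomials `F i`. -/
noncomputable def evalMap {K : Type*} [CommSemiring K] {n : ℕ}
    (F : Fin n → MvPolynomial (Fin n) K) : (Fin n → K) → (Fin n → K) :=
  fun x i => eval x (F i)

/-- `F` defines a polynomial automorphism of `K^n`: the induced map is bijective with a
polynomial inverse. -/
def IsPolyAut {K : Type*} [CommSemiring K] {n : ℕ}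
    (F : Fin n → MvPolynomial (Fin n) K) : Prop :=
  ∃ G : Fin n → MvPolynomial (Fin n) K,
    (∀ x, evalMap F (evalMap G x) = x) ∧ (∀ x, evalMap G (evalMap F x) = x)

/-- The Jacobian of the polynomial map `F`: the determinant of the matrix of partial
derivatives `∂F_i/∂x_j` (for a polynomial automorphism it is a nonzero constant). -/
noncomputable def jacPoly {K : Type*} [CommRing K] {n : ℕ}
    (F : Fin n → MvPolynomial (Fin n) K) : MvPolynomial (Fin n) K :=
  (Matrix.of fun i j => pderiv j (F i)).det

section Helpers

variable {K : Type*} [Field K] {n : ℕ}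

/-- The chain rule for the polynomial substitution `p ↦ p ∘ F`. -/
lemma pderiv_aeval_chain (F : Fin n → MvPolynomial (Fin n) K) (p : MvPolynomial (Fin n) K)
    (j : Fin n) :
    pderiv j (aeval F p) = ∑ k, aeval F (pderiv k p) * pderiv j (F k) := by
  induction p using MvPolynomial.induction_on with
  | C a => simp [MvPolynomial.algebraMap_eq]
  | add p q hp hq => simp only [map_add, hp, hq, add_mul, Finset.sum_add_distrib]
  | mul_X p i hp =>
    have key : ∑ k, aeval F p * aeval F (pderiv k (X i : MvPolynomial (Fin n) K)) * pderiv j (F k)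
        = aeval F p * pderiv j (F i) := by
      rw [Finset.sum_eq_single i]
      · simp
      · intro b _ hb
        rw [pderiv_X_of_ne hb.symm]
        simp
      · simp
    simp only [map_mul, aeval_X, Derivation.leibniz, smul_eq_mul, hp, map_add, add_mul,
      Finset.sum_add_distrib, key]
    rw [Finset.mul_sum]
    congr 1
    exact Finset.sum_congr rfl fun k _ => by ring

/-- If `G ∘ F` is the identity as a polynomial map, the Jacobian of `F` is invertible. -/
lemma isUnit_jacPoly (F G : Fin n → MvPolynomial (Fin n) K)
    (hGF : ∀ i, aeval F (G i) = X i) : IsUnit (jacPoly F) := by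
  have hm : (Matrix.of fun i k => aeval F (pderiv k (G i))) *
      (Matrix.of fun i j => pderiv j (F i)) = 1 := by
    ext1 i j
    rw [Matrix.mul_apply]
    simp only [Matrix.of_apply]
    rw [← pderiv_aeval_chain, hGF, pderiv_X, Matrix.one_apply, Pi.single_apply]
  have hd := congrArg Matrix.det hm
  rw [Matrix.det_mul, Matrix.det_one] at hd
  exact IsUnit.of_mul_eq_one_right _ hd

/-- Modulo `h`, the Jacobian of `x + h A` is `1 + ∑ A_k ∂_k h`. -/
lemma dvd_jacPoly_sub (F A : Fin n → MvPolynomial (Fin n) K) (h : MvPolynomial (Fin n) K)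
    (hA : ∀ i, F i = X i + h * A i) :
    h ∣ jacPoly F - (1 + ∑ k, A k * pderiv k h) := by
  rw [← Ideal.mem_span_singleton, ← Ideal.Quotient.eq]
  set π := Ideal.Quotient.mk (Ideal.span {h}) with hπ
  have hh : π h = 0 := Ideal.Quotient.eq_zero_iff_mem.2 (Ideal.mem_span_singleton_self h)
  have hmat : π.mapMatrix (Matrix.of fun i j => pderiv j (F i)) =
      1 + Matrix.replicateCol Unit (fun i => π (A i)) *
        Matrix.replicateRow Unit (fun j => π (pderiv j h)) := by
    ext1 i j
    simp only [RingHom.mapMatrix_apply, Matrix.map_apply, Matrix.of_apply, hA, map_add,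
      Derivation.leibniz, smul_eq_mul, map_mul, hh, zero_mul, zero_add, pderiv_X,
      Matrix.add_apply, Matrix.mul_apply, Matrix.replicateCol_apply, Matrix.replicateRow_apply,
      Finset.univ_unique, Finset.sum_singleton, Matrix.one_apply, Pi.single_apply]
    split_ifs <;> simp
  rw [jacPoly, RingHom.map_det, hmat, Matrix.det_one_add_replicateCol_mul_replicateRow]
  simp only [dotProduct, map_add, map_one, map_sum, map_mul, mul_comm]

/-- The substitution `x ↦ x + h A` is the identity modulo `h`. -/
lemma dvd_aeval_sub (F A : Fin n → MvPolynomial (Fin n) K) (h : MvPolynomial (Fin n) K)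
    (hA : ∀ i, F i = X i + h * A i) (p : MvPolynomial (Fin n) K) :
    h ∣ aeval F p - p := by
  rw [← Ideal.mem_span_singleton, ← Ideal.Quotient.eq]
  have hh : Ideal.Quotient.mk (Ideal.span {h}) h = 0 :=
    Ideal.Quotient.eq_zero_iff_mem.2 (Ideal.mem_span_singleton_self h)
  have e : (Ideal.Quotient.mkₐ K (Ideal.span {h})).comp (aeval F) =
      Ideal.Quotient.mkₐ K (Ideal.span {h}) := by
    ext i
    simp [hA, hh]
  exact DFunLike.congr_fun e p

/-- Differentiating `p ∘ F = p` for `F = x + h A` and reducing modulo `h`. -/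
lemma dvd_mul_pderiv_of_fixed (F A : Fin n → MvPolynomial (Fin n) K)
    (h : MvPolynomial (Fin n) K) (hA : ∀ i, F i = X i + h * A i) (p : MvPolynomial (Fin n) K)
    (hp : aeval F p = p) (j : Fin n) :
    h ∣ (∑ k, A k * pderiv k p) * pderiv j h := by
  have hc := pderiv_aeval_chain F p j
  rw [hp] at hc
  rw [← Ideal.mem_span_singleton, ← Ideal.Quotient.eq_zero_iff_mem]
  set π := Ideal.Quotient.mk (Ideal.span {h}) with hπ
  have hh : π h = 0 := Ideal.Quotient.eq_zero_iff_mem.2 (Ideal.mem_span_singleton_self h)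
  have hφ (q : MvPolynomial (Fin n) K) : π (aeval F q) = π q :=
    Ideal.Quotient.eq.2 (Ideal.mem_span_singleton.2 (dvd_aeval_sub F A h hA q))
  have hF (k : Fin n) : π (pderiv j (F k)) = π (pderiv j (X k)) + π (A k) * π (pderiv j h) := by
    simp [hA, hh]
  have hX : ∑ k, π (pderiv k p) * π (pderiv j (X k)) = π (pderiv j p) := by
    rw [Finset.sum_eq_single j]
    · simp
    · intro b _ hb
      rw [pderiv_X_of_ne hb]
      simp
    · simp
  have hc' := congrArg π hc
  simp only [map_sum, map_mul, hφ, hF, mul_add, Finset.sum_add_distrib, hX] at hc'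
  rw [left_eq_add] at hc'
  rw [← hc']
  simp only [map_sum, map_mul, Finset.sum_mul]
  exact Finset.sum_congr rfl fun k _ => by ring

/-- Over an infinite field, an identity between polynomial maps is a polynomial identity. -/
lemma aeval_eq_X_of_evalMap [Infinite K] (F G : Fin n → MvPolynomial (Fin n) K)
    (hGF : ∀ x, evalMap G (evalMap F x) = x) (i : Fin n) : aeval F (G i) = X i := by
  refine MvPolynomial.funext fun x => ?_
  have h1 : eval x (aeval F (G i)) = eval (fun k => eval x (F k)) (G i) := by
    change eval x (bind₁ F (G i)) = _
    exact eval₂Hom_bind₁ _ _ _ _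
  rw [h1, eval_X]
  exact congrFun (hGF x) i

end Helpers

/-- If `f` is a non-special polynomial automorphism of `K^n`
(`Jac(f) ≠ 1`) and `h` is a nonconstant squarefree polynomial with `Z(h) ⊆ Fix(f)`,
then `h` is irreducible (so the hypersurface `Z(h)` is irreducible). -/
theorem irreducible_of_nonspecial_fixed_hypersurface {K : Type*} [Field K] [IsAlgClosed K]
    {n : ℕ} (F : Fin n → MvPolynomial (Fin n) K) (hF : IsPolyAut F)
    (hjac : jacPoly F ≠ 1)
    (h : MvPolynomial (Fin n) K) (hdeg : h.totalDegree ≠ 0) (hsf : Squarefree h)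
    (hsub : ∀ x : Fin n → K, eval x h = 0 → evalMap F x = x) :
    Irreducible h := by
  have hirr : ∀ p q : MvPolynomial (Fin n) K, Irreducible p → h = p * q → IsUnit q := by
    obtain ⟨G, hFG, hGF⟩ := hF
    have hGF' := aeval_eq_X_of_evalMap F G hGF
    have hFG' := aeval_eq_X_of_evalMap G F hFG
    obtain ⟨c, hc, hcF⟩ := isUnit_iff_eq_C_of_isReduced.1 (isUnit_jacPoly F G hGF')
    have hdvd (i : Fin n) : h ∣ F i - X i := by
      have hrad := isRadical_iff_span_singleton.1 hsf.isRadical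
      rw [← Ideal.mem_span_singleton, ← hrad.radical,
        ← vanishingIdeal_zeroLocus_eq_radical (K := K)]
      intro x hx
      have hx0 : eval x h = 0 := by
        simpa [coe_aeval_eq_eval] using hx h (Ideal.mem_span_singleton_self h)
      have hxi : eval x (F i) = x i := congrFun (hsub x hx0) i
      simp [hxi]
    choose A hA using hdvd
    replace hA (i : Fin n) : F i = X i + h * A i := by rw [← hA]; ring
    let φ : MvPolynomial (Fin n) K ≃ₐ[K] MvPolynomial (Fin n) K :=
      AlgEquiv.ofAlgHom (aeval F) (aeval G) (by ext1 i; simpa using hGF' i) (by ext1 i; simpa using hFG' i)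
    have hφ (p : MvPolynomial (Fin n) K) : φ p = aeval F p := rfl
    obtain ⟨w, hw⟩ := dvd_jacPoly_sub F A h hA
    have hc1 : c - 1 ≠ 0 := fun h0 => hjac (by rw [hcF, sub_eq_zero.1 h0, C_1])
    have hcu : IsUnit (C (c - 1) : MvPolynomial (Fin n) K) := (IsUnit.mk0 _ hc1).map C
    have hDh : ∑ k, A k * pderiv k h = C (c - 1) - h * w := by
      rw [← hw, hcF, C_sub, C_1]; ring
    intro p q hp hpq
    by_contra hq
    -- `φ p` is irreducible and divisible by `p`, hence a constant multiple of `p`.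
    obtain ⟨t, ht⟩ := dvd_aeval_sub F A h hA p
    have hpp : p ∣ φ p := ⟨1 + q * t, by
      rw [hφ]; linear_combination ht + t * hpq⟩
    have hφp : Irreducible (φ p) := (MulEquiv.irreducible_iff φ).2 hp
    obtain ⟨u, hu⟩ := (hp.dvd_irreducible_iff_associated hφp).1 hpp
    obtain ⟨a, ha, hau⟩ := isUnit_iff_eq_C_of_isReduced.1 u.isUnit
    rw [hφ, hau] at hu
    -- Cancelling `p` in `p q ∣ (a - 1) p` leaves the non-unit `q` dividing `a - 1`.
    have hqu : q ∣ C (a - 1) := ⟨t, mul_left_cancel₀ hp.ne_zero (by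
      rw [C_sub, C_1]; linear_combination hu + ht + t * hpq)⟩
    have ha1 : a - 1 = 0 := by
      by_contra h0
      exact hq (isUnit_of_dvd_unit hqu ((IsUnit.mk0 _ h0).map C))
    rw [sub_eq_zero.1 ha1, C_1, mul_one] at hu
    have hDD : h ∣ (∑ k, A k * pderiv k p) * (∑ k, A k * pderiv k h) := by
      rw [Finset.mul_sum]
      refine Finset.dvd_sum fun k _ => ?_
      rw [mul_left_comm]
      exact (dvd_mul_pderiv_of_fixed F A h hA p hu.symm k).mul_left _
    have hDp : h ∣ ∑ k, A k * pderiv k p := by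
      rw [hDh, mul_sub, dvd_sub_left ((dvd_mul_right h w).mul_left _)] at hDD
      exact hcu.dvd_mul_right.1 hDD
    have hleib : ∑ k, A k * pderiv k h =
        p * (∑ k, A k * pderiv k q) + q * ∑ k, A k * pderiv k p := by
      simp only [Finset.mul_sum, ← Finset.sum_add_distrib]
      refine Finset.sum_congr rfl fun k _ => ?_
      rw [hpq, Derivation.leibniz, smul_eq_mul, smul_eq_mul]
      ring
    have hph : p ∣ h := ⟨q, hpq⟩
    have hpD : p ∣ ∑ k, A k * pderiv k h := by
      rw [hleib]
      exact dvd_add (dvd_mul_right _ _) ((hph.trans hDp).mul_left _)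
    rw [hDh, dvd_sub_left (hph.mul_right w)] at hpD
    exact hp.not_isUnit (isUnit_of_dvd_unit hpD hcu)
  have hnu : ¬ IsUnit h := fun hu => hdeg (isUnit_iff_totalDegree_of_isReduced.1 hu).2
  have hne : h ≠ 0 := fun h0 => hdeg (by rw [h0, totalDegree_zero])
  obtain ⟨p, hp, q, hpq⟩ := WfDvdMonoid.exists_irreducible_factor hnu hne
  obtain ⟨v, hv⟩ := hirr p q hp hpq
  have hass : Associated p h := ⟨v, by rw [hv, hpq]⟩
  exact hass.irreducible hp
end

section
/- Let K be an algebraically closed field of characteristic zero and let f : K^n → K^n be a polynomial automorphism such that λ = Jac(f) has infinite order in the multiplicative group K^* (in particular f is non-special of infinite order). Let h ∈ K[x_1,…,x_n] be a nonconstant squarefree polynomial whose zero set H = Z(h) is contained in Fix(f). Then H is super-smooth: for every point x ∈ K^n (not only points of H), the gradient (∂h/∂x_1(x), …, ∂h/∂x_n(x)) is nonzero. -/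
/-!
Write `f` for the automorphism, `λ` for its Jacobian and `H = Z(h)`. The proof shows that `h` is
an eigenvector, `h ∘ f = λ h`, and then that a critical point of `h` would produce infinitely many
critical values.

*The relation `h ∘ f = λ h` (`bind₁_eq_C_mul`).* Since `h` is squarefree and `f` fixes `H`
pointwise, the Nullstellensatz gives `f = id + h g` for a polynomial vector field `g`. On `H` the
Jacobian matrix is therefore `1 + g ⊗ ∇h`, so `λ = 1 + ∇h · g` there; as `λ ≠ 1`, the gradient of
`h` does not vanish on `H`. Also `h` divides `h ∘ f`, say `h ∘ f = h q`. Differentiating at a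
point of `H` gives `q = λ` on `H`. A zero `x` of `q` satisfies `f x ∈ H`, hence `f (f x) = f x`,
`f x = x` and `x ∈ H`, contradicting `q x = λ ≠ 0`. So `q` vanishes nowhere and is the constant
`λ`.

*Finiteness of critical values (`finite_critical_values`).* This is the algebraic Sard theorem
for a polynomial function. If `P` is a prime ideal containing all `∂h/∂x_i`, the class of `h` in
the fraction field `L` of `K[x]/P` has zero Kähler differential over `K`. In characteristic zero
this makes it algebraic over `K` (`isAlgebraic_of_D_eq_zero`), hence equal to a constant because
`K` is algebraically closed. The critical ideal has finitely many minimal primes, and each of them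
contributes a single value.

*Conclusion.* If `x` is critical for `h`, the relation `h ∘ f = λ h` and the invertibility of the
Jacobian matrix make every `f^k x` critical, with value `λ^k h(x)`. Since `x ∉ H`, these values are
pairwise distinct, contradicting finiteness.
-/

open MvPolynomial

/-! ### Finiteness of critical values -/

/-- In characteristic zero, an element `t` of a finitely generated field extension `L / K` with
`dt = 0` in `Ω[L⁄K]` is algebraic. If `t` were transcendental, `L` would be formally smooth over
`K[X]` acting through `X ↦ t`, so `L ⊗ Ω[K[X]⁄K] → Ω[L⁄K]` would be injective while sending the
nonzero element `1 ⊗ dX` to `dt`. -/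
theorem isAlgebraic_of_D_eq_zero {K L : Type*} [Field K] [CharZero K] [Field L] [Algebra K L]
    [Algebra.EssFiniteType K L] (t : L) (ht : KaehlerDifferential.D K L t = 0) :
    IsAlgebraic K t := by
  by_contra hne
  have htr : Transcendental K t := hne
  let φ : Polynomial K →ₐ[K] L := Polynomial.aeval t
  let : Algebra (Polynomial K) L := φ.toRingHom.toAlgebra
  have : IsScalarTower K (Polynomial K) L := .of_algebraMap_eq fun x => (φ.commutes x).symm
  have hinj : Function.Injective (algebraMap (Polynomial K) L) :=
    transcendental_iff_injective.1 htr
  have : FaithfulSMul (Polynomial K) L := (faithfulSMul_iff_algebraMap_injective _ _).2 hinj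
  let E := FractionRing (Polynomial K)
  let : Algebra E L := FractionRing.liftAlgebra (Polynomial K) L
  have : IsScalarTower (Polynomial K) E L := inferInstance
  have : IsScalarTower K E L := .to₁₃₄ K (Polynomial K) E L
  have : CharZero E := charZero_of_injective_algebraMap (algebraMap K E).injective
  have : Algebra.EssFiniteType E L := .of_comp K E L
  have : Algebra.FormallySmooth E L := inferInstance
  have : Algebra.FormallySmooth (Polynomial K) E := .of_isLocalization (nonZeroDivisors _)
  have : Algebra.FormallySmooth (Polynomial K) L := .comp _ E _
  have := Algebra.FormallySmooth.subsingleton_h1Cotangent (R := Polynomial K) (A := L)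
  have key := (Algebra.H1Cotangent.exact_δ_mapBaseChange K (Polynomial K) L
    (1 ⊗ₜ[Polynomial K] KaehlerDifferential.D K (Polynomial K) Polynomial.X)).1 (by
      have : algebraMap (Polynomial K) L Polynomial.X = t := Polynomial.aeval_X t
      simp [this, ht])
  obtain ⟨y, hy⟩ := key
  rw [Subsingleton.elim y 0, map_zero] at hy
  -- `1 ⊗ dX = 0` is impossible: `dX` is a basis of `Ω[K[X]⁄K]`, so it is sent to `1` in `L`.
  have h2 := congrArg (LinearMap.baseChange L (KaehlerDifferential.polynomialEquiv K).toLinearMap) hy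
  have h3 := congrArg (TensorProduct.rid (Polynomial K) L) h2
  simp at h3

/-- A polynomial is constant on an irreducible variety along which its gradient vanishes. -/
theorem exists_sub_C_mem {K : Type*} [Field K] [IsAlgClosed K] [CharZero K] {n : ℕ}
    (h : MvPolynomial (Fin n) K) (P : Ideal (MvPolynomial (Fin n) K)) [P.IsPrime]
    (hP : ∀ i, pderiv i h ∈ P) : ∃ c : K, h - C c ∈ P := by
  let A := MvPolynomial (Fin n) K ⧸ P
  let L := FractionRing A
  let φ : MvPolynomial (Fin n) K →ₐ[K] L :=
    (IsScalarTower.toAlgHom K A L).comp (Ideal.Quotient.mkₐ K P)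
  have hker : ∀ p, φ p = 0 ↔ p ∈ P := fun p => by
    simp [φ, A, Ideal.Quotient.eq_zero_iff_mem]
  have : Algebra.EssFiniteType A L := .of_isLocalization _ (nonZeroDivisors A)
  have : Algebra.EssFiniteType K L := .comp K A L
  have hD : ∀ p, KaehlerDifferential.D K L (φ p)
      = ∑ i, φ (pderiv i p) • KaehlerDifferential.D K L (φ (X i)) := by
    intro p
    induction p using MvPolynomial.induction_on with
    | C a =>
      have : φ (C a) = algebraMap K L a := φ.commutes a
      simp [this]
    | add p q hp hq => simp [hp, hq, add_smul, Finset.sum_add_distrib]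
    | mul_X p i hp =>
      simp only [map_mul, Derivation.leibniz, hp, map_add, smul_eq_mul, add_smul,
        Finset.sum_add_distrib, Finset.smul_sum, smul_smul, pderiv_X]
      congr 1
      simp [Pi.single_apply, apply_ite φ, ite_smul]
  have h0 : KaehlerDifferential.D K L (φ h) = 0 := by
    rw [hD]
    exact Finset.sum_eq_zero fun i _ => by rw [(hker _).2 (hP i), zero_smul]
  have halg := (isAlgebraic_of_D_eq_zero _ h0).isIntegral
  obtain ⟨c, hc⟩ : ∃ c : K, algebraMap K L c = φ h := by
    have := IsAlgClosed.degree_eq_one_of_irreducible K (minpoly.irreducible halg)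
    exact minpoly.mem_range_of_degree_eq_one K _ this
  refine ⟨c, (hker _).1 ?_⟩
  have : φ (C c) = algebraMap K L c := φ.commutes c
  rw [map_sub, this, hc, sub_self]

/-- The algebraic Sard theorem for a polynomial function: it has finitely many critical values. -/
theorem finite_critical_values {K : Type*} [Field K] [IsAlgClosed K] [CharZero K] {n : ℕ}
    (h : MvPolynomial (Fin n) K) :
    {c : K | ∃ x, (∀ i, eval x (pderiv i h) = 0) ∧ eval x h = c}.Finite := by
  let J : Ideal (MvPolynomial (Fin n) K) := Ideal.span (Set.range fun i => pderiv i h)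
  have hJ : ∀ P ∈ J.minimalPrimes, ∃ c : K, h - C c ∈ P := fun P hP => by
    have := hP.1.1
    exact exists_sub_C_mem h P fun i => hP.1.2 (Ideal.subset_span ⟨i, rfl⟩)
  choose! c hc using hJ
  refine ((J.finite_minimalPrimes_of_isNoetherianRing).image c).subset ?_
  rintro _ ⟨x, hx, rfl⟩
  have hle : J ≤ RingHom.ker (eval x) := by
    rw [Ideal.span_le]
    rintro _ ⟨i, rfl⟩
    exact hx i
  have : (RingHom.ker (eval x)).IsPrime := RingHom.ker_isPrime _
  obtain ⟨P, hP, hPle⟩ := Ideal.exists_minimalPrimes_le hle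
  refine ⟨P, hP, ?_⟩
  have := hPle (hc P hP)
  rw [RingHom.mem_ker, map_sub, eval_C, sub_eq_zero] at this
  exact this.symm

/-! ### The relation `h ∘ f = λ h` -/

/-- The chain rule for the composite `p ∘ F`, written `bind₁ F p`. -/
theorem pderiv_bind₁ {K : Type*} [CommRing K] {n : ℕ}
    (F : Fin n → MvPolynomial (Fin n) K) (p : MvPolynomial (Fin n) K) (j : Fin n) :
    pderiv j (bind₁ F p) = ∑ i, bind₁ F (pderiv i p) * pderiv j (F i) := by
  induction p using MvPolynomial.induction_on with
  | C a => simp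
  | add p q hp hq => simp [hp, hq, add_mul, Finset.sum_add_distrib]
  | mul_X p i hp =>
    simp only [map_mul, Derivation.leibniz, hp, map_add, smul_eq_mul, add_mul,
        Finset.sum_add_distrib, Finset.mul_sum, pderiv_X, bind₁_X_right]
    congr 1
    · simp [Pi.single_apply, apply_ite (bind₁ F)]
    · exact Finset.sum_congr rfl fun _ _ => by ring

/-- The Nullstellensatz for a hypersurface with reduced equation `h`. -/
theorem dvd_of_forall_eval {K : Type*} [Field K] [IsAlgClosed K] {n : ℕ}
    {h p : MvPolynomial (Fin n) K} (hsf : Squarefree h)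
    (hp : ∀ x, eval x h = 0 → eval x p = 0) : h ∣ p := by
  have hrad := (isRadical_iff_span_singleton.1 hsf.isRadical).radical
  rw [← Ideal.mem_span_singleton, ← hrad,
    ← vanishingIdeal_zeroLocus_eq_radical (K := K)]
  intro x hx
  exact hp x (hx h (Ideal.mem_span_singleton_self h))

theorem exists_eq_C_of_forall_eval_ne_zero {K : Type*} [Field K] [IsAlgClosed K] {n : ℕ}
    {p : MvPolynomial (Fin n) K} (hp : ∀ x, eval x p ≠ 0) : ∃ c, p = C c := by
  have h1 : (1 : MvPolynomial (Fin n) K) ∈ (Ideal.span {p}).radical := by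
    rw [← vanishingIdeal_zeroLocus_eq_radical (K := K)]
    intro x hx
    exact absurd (hx p (Ideal.mem_span_singleton_self p)) (hp x)
  have h2 : IsUnit p := by
    rw [← Ideal.span_singleton_eq_top, ← Ideal.radical_eq_top, Ideal.eq_top_iff_one]
    exact h1
  rw [isUnit_iff_eq_C_of_isReduced] at h2
  obtain ⟨c, -, hc⟩ := h2
  exact ⟨c, hc⟩

theorem eval_bind₁_eq {K : Type*} [CommRing K] {n : ℕ}
    (F : Fin n → MvPolynomial (Fin n) K) (p : MvPolynomial (Fin n) K) (x : Fin n → K) :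
    eval x (bind₁ F p) = eval (evalMap F x) p :=
  eval₂Hom_bind₁ (RingHom.id K) x F p

/-- The gradient of `p` at `x`, as a row vector. -/
noncomputable def gradAt {K : Type*} [CommRing K] {n : ℕ}
    (p : MvPolynomial (Fin n) K) (x : Fin n → K) : Fin n → K :=
  fun j => eval x (pderiv j p)

/-- The Jacobian matrix of `F` at `x`; its `i`-th row is the gradient of `F i`. -/
noncomputable def jacAt {K : Type*} [CommRing K] {n : ℕ}
    (F : Fin n → MvPolynomial (Fin n) K) (x : Fin n → K) : Matrix (Fin n) (Fin n) K :=
  Matrix.of fun i => gradAt (F i) x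

theorem det_jacAt {K : Type*} [CommRing K] {n : ℕ}
    (F : Fin n → MvPolynomial (Fin n) K) (x : Fin n → K) :
    (jacAt F x).det = eval x (jacPoly F) := by
  rw [jacPoly, RingHom.map_det]
  rfl

/-- The chain rule at a point: `∇(p ∘ F)(x) = ∇p(F x) · dF(x)`. -/
theorem gradAt_bind₁ {K : Type*} [CommRing K] {n : ℕ}
    (F : Fin n → MvPolynomial (Fin n) K) (p : MvPolynomial (Fin n) K) (x : Fin n → K) :
    gradAt (bind₁ F p) x = Matrix.vecMul (gradAt p (evalMap F x)) (jacAt F x) := by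
  funext j
  simp [gradAt, jacAt, pderiv_bind₁, Matrix.vecMul, dotProduct, eval_bind₁_eq]

/-- By the chain rule, the Jacobian matrix of the inverse is an inverse of that of `F`. -/
theorem IsPolyAut.isUnit_det_jacAt {K : Type*} [Field K] [Infinite K] {n : ℕ}
    {F : Fin n → MvPolynomial (Fin n) K} (hF : IsPolyAut F) (x : Fin n → K) :
    IsUnit (jacAt F x).det := by
  obtain ⟨G, -, hGF⟩ := hF
  have hG : ∀ i, bind₁ F (G i) = X i := fun i => MvPolynomial.funext fun y => by
    rw [eval_bind₁_eq, eval_X]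
    exact congrFun (hGF y) i
  have hmul : jacAt G (evalMap F x) * jacAt F x = 1 := by
    ext i j
    have := congrFun (gradAt_bind₁ F (G i) x) j
    rw [hG] at this
    rw [Matrix.mul_apply_eq_vecMul]
    refine this.symm.trans ?_
    simp [gradAt, pderiv_X, Matrix.one_apply, Pi.single_apply, apply_ite (eval x)]
  exact IsUnit.of_mul_eq_one_right _ (by rw [← Matrix.det_mul, hmul, Matrix.det_one])

/-- Where `h` vanishes, the Jacobian matrix of `id + h g` is the rank-one perturbation
`1 + g ⊗ ∇h` of the identity. -/
theorem jacAt_of_eval_eq_zero {K : Type*} [CommRing K] {n : ℕ}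
    {F g : Fin n → MvPolynomial (Fin n) K} {h : MvPolynomial (Fin n) K}
    (hg : ∀ i, F i = X i + h * g i) {x : Fin n → K} (hx : eval x h = 0) :
    jacAt F x = 1 + Matrix.vecMulVec (evalMap g x) (gradAt h x) := by
  ext i j
  simp [jacAt, gradAt, hg, hx, pderiv_X, Matrix.one_apply, Pi.single_apply,
    apply_ite (eval x), Matrix.vecMulVec_apply, evalMap]

/-- If `F` fixes `Z(h)` pointwise and has Jacobian `lam ≠ 1`, then `h` is smooth along `Z(h)` and
`h ∘ F = lam * h`. -/
theorem bind₁_eq_C_mul {K : Type*} [Field K] [IsAlgClosed K] [CharZero K]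
    {n : ℕ} {F : Fin n → MvPolynomial (Fin n) K} (hF : IsPolyAut F)
    {lam : K} (hjac : jacPoly F = MvPolynomial.C lam) (hlam : lam ≠ 1)
    {h : MvPolynomial (Fin n) K} (hdeg : h.totalDegree ≠ 0) (hsf : Squarefree h)
    (hsub : ∀ x : Fin n → K, eval x h = 0 → evalMap F x = x) :
    (∀ x, eval x h = 0 → gradAt h x ≠ 0) ∧ bind₁ F h = C lam * h := by
  have hdvd : ∀ i, h ∣ F i - X i := fun i => dvd_of_forall_eval hsf fun x hx => by
    have := congrFun (hsub x hx) i
    rw [map_sub, eval_X, sub_eq_zero]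
    exact this
  choose g hg using hdvd
  have hg : ∀ i, F i = X i + h * g i := fun i => by rw [← hg i]; ring
  have hdot : ∀ x, eval x h = 0 → 1 + gradAt h x ⬝ᵥ evalMap g x = lam := fun x hx => by
    have h1 := det_jacAt F x
    rw [hjac, eval_C, jacAt_of_eval_eq_zero hg hx, Matrix.vecMulVec_eq Unit,
      Matrix.det_one_add_replicateCol_mul_replicateRow] at h1
    exact h1
  have hgrad : ∀ x, eval x h = 0 → gradAt h x ≠ 0 := fun x hx h0 => hlam <| by
    rw [← hdot x hx, h0, zero_dotProduct, add_zero]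
  refine ⟨hgrad, ?_⟩
  obtain ⟨q, hq⟩ : h ∣ bind₁ F h := dvd_of_forall_eval hsf fun x hx => by
    rw [eval_bind₁_eq, hsub x hx, hx]
  -- Differentiating `h ∘ F = h * q` at a zero of `h` exhibits the gradient of `h` as a left
  -- eigenvector of the Jacobian matrix, with eigenvalue `q x` and also with eigenvalue `lam`.
  have hqH : ∀ x, eval x h = 0 → eval x q = lam := fun x hx => by
    have h1 := gradAt_bind₁ F h x
    rw [hsub x hx, jacAt_of_eval_eq_zero hg hx, Matrix.vecMul_add, Matrix.vecMul_one,
      Matrix.vecMul_vecMulVec, hq] at h1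
    obtain ⟨j, hj⟩ := Function.ne_iff.1 (hgrad x hx)
    have h2 := congrFun h1 j
    have h3 : gradAt (h * q) x j = eval x q * gradAt h x j := by
      simp [gradAt, hx]
    rw [h3] at h2
    refine mul_right_cancel₀ hj ?_
    rw [h2, ← hdot x hx]
    simp
    ring
  have hlam0 : lam ≠ 0 := fun h0 => by
    have := (hF.isUnit_det_jacAt 0).ne_zero
    rw [det_jacAt, hjac, eval_C] at this
    exact this h0
  have hqne : ∀ x, eval x q ≠ 0 := fun x hx => by
    have h1 : eval (evalMap F x) h = 0 := by
      rw [← eval_bind₁_eq, hq, map_mul, hx, mul_zero]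
    obtain ⟨G, -, hGF⟩ := hF
    have h2 : evalMap F x = x := (Function.LeftInverse.injective hGF) (hsub _ h1)
    rw [h2] at h1
    exact hlam0 ((hqH x h1).symm.trans hx)
  obtain ⟨c, rfl⟩ := exists_eq_C_of_forall_eval_ne_zero hqne
  obtain ⟨x, hx⟩ : ∃ x, eval x h = 0 := by
    by_contra! hne
    obtain ⟨a, rfl⟩ := exists_eq_C_of_forall_eval_ne_zero hne
    exact hdeg (totalDegree_C a)
  have hc := hqH x hx
  rw [eval_C] at hc
  rw [hq, hc, mul_comm]

/-! ### Critical points propagate along orbits -/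

/-- Let `K` be algebraically closed of characteristic zero and `f` a
polynomial automorphism of `K^n` whose Jacobian `λ` has infinite order in `K^*`. If `h` is
a nonconstant squarefree polynomial with `Z(h) ⊆ Fix(f)`, then `Z(h)` is super-smooth:
the gradient of `h` vanishes at no point of `K^n`. -/
theorem supersmooth_of_jac_infinite_order {K : Type*} [Field K] [IsAlgClosed K] [CharZero K]
    {n : ℕ} (F : Fin n → MvPolynomial (Fin n) K) (hF : IsPolyAut F)
    (lam : K) (hjac : jacPoly F = MvPolynomial.C lam)
    (hord : ∀ k : ℕ, 1 ≤ k → lam ^ k ≠ 1)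
    (h : MvPolynomial (Fin n) K) (hdeg : h.totalDegree ≠ 0) (hsf : Squarefree h)
    (hsub : ∀ x : Fin n → K, eval x h = 0 → evalMap F x = x) :
    ∀ x : Fin n → K, ∃ i, eval x (pderiv i h) ≠ 0 := by
  intro x
  by_contra! hx
  obtain ⟨hgrad, hbind⟩ := bind₁_eq_C_mul hF hjac (by simpa using hord 1 le_rfl) hdeg hsf hsub
  have hdet : ∀ y, IsUnit (jacAt F y).det := hF.isUnit_det_jacAt
  have hlam0 : lam ≠ 0 := by
    have := (hdet x).ne_zero
    rwa [det_jacAt, hjac, eval_C] at this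
  have hval : ∀ y, eval (evalMap F y) h = lam * eval y h := fun y => by
    rw [← eval_bind₁_eq, hbind, map_mul, eval_C]
  have hcrit : ∀ y, gradAt h y = 0 → gradAt h (evalMap F y) = 0 := fun y hy => by
    have h1 := gradAt_bind₁ F h y
    have h2 : gradAt (bind₁ F h) y = 0 := by
      rw [hbind, ← smul_eq_C_mul]
      funext j
      have : eval y (pderiv j h) = 0 := congrFun hy j
      simp [gradAt, this]
    exact Matrix.eq_zero_of_vecMul_eq_zero (hdet y).ne_zero (h1.symm.trans h2)
  have hx' : gradAt h x = 0 := funext hx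
  have hx0 : eval x h ≠ 0 := fun h0 => hgrad x h0 hx'
  have horbit : ∀ k : ℕ, gradAt h ((evalMap F)^[k] x) = 0 ∧
      eval ((evalMap F)^[k] x) h = lam ^ k * eval x h := fun k => by
    induction k with
    | zero => simpa using hx'
    | succ k ih =>
      rw [Function.iterate_succ_apply']
      exact ⟨hcrit _ ih.1, by rw [hval, ih.2]; ring⟩
  have hinj : Function.Injective fun k : ℕ => lam ^ k * eval x h := fun a b hab => by
    have hab : lam ^ a = lam ^ b := mul_right_cancel₀ hx0 hab
    have hpow : ∀ {a b : ℕ}, a < b → lam ^ a ≠ lam ^ b := fun {a b} hlt he => by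
      refine hord (b - a) (by omega) ?_
      rw [pow_sub₀ _ hlam0 hlt.le, he, mul_inv_cancel₀ (pow_ne_zero _ hlam0)]
    rcases lt_trichotomy a b with hlt | heq | hlt
    · exact absurd hab (hpow hlt)
    · exact heq
    · exact absurd hab.symm (hpow hlt)
  refine Set.infinite_of_injective_forall_mem hinj (fun k => ?_) (finite_critical_values h)
  exact ⟨_, congrFun (horbit k).1, (horbit k).2⟩
end
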